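/- For every n ≥ 1 and any random vectors θ₀, …, θ_{n−1} in ℝ^d defined on a common probability space, their average θ̄_n = (1/n)·Σ_{i=0}^{n−1} θ_i satisfies E‖θ̄_n − θ*‖²_H ≤ (2σ²/(1−η̃)²)·E‖(1/n)·Σ_{i=0}^{n−1} ∇f(θ_i)‖²_{H⁻¹} + (800/(1−η̃)²)·(ln(2/(1−η)))²·E[((1/n)·Σ_{i=0}^{n−1} ⟨∇f(θ_i), θ_i − θ*⟩)²], where both sides may be infinite. -/

import Mathlib

/-!
Write `vᵢ = θᵢ - θ*`. The residual `⟨x, θ* - θ⟩ + ε` is a centered Gaussian of variance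
`s² = σ² + ‖θ - θ*‖²_H` independent of `b`, so `f(θ)` equals `E|s g + b|` with `g` standard normal
(`fLoss_eq`). Its derivative in `s` is `√(2/π) E exp(-b²/(2s²))` (`hasDerivAt_scale`), whence
`∇f(θ) = α(σ_θ) H (θ - θ*)` (`gradient_fLoss`).

The function `α` is nearly constant near `0`: `|α(0) - α(z)| ≤ (2 log(2/(1-η))/σ) z α(z)`
(`abs_alphaF_sub_le`). One side follows from monotonicity of `E exp(-b²/(2v))` in `v`; the other
from Jensen's inequality, which bounds `E exp(-b²/(2σ²))` below by
`(E exp(-b²/(2(σ²+z²))))^(1+z²/σ²)`, together with `E exp(-b²/(2v)) ≥ P(b = 0) = 1 - η`.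

Finally `α(0) v̄ = n⁻¹ ∑ α(σᵢ) vᵢ + n⁻¹ ∑ (α(0) - α(σᵢ)) vᵢ`. The first average has `H`-norm equal
to the `H⁻¹`-norm of the average gradient. By the comparison of `α(0)` and `α(σᵢ)`, the second has
`H`-norm at most a constant times `n⁻¹ ∑ α(σᵢ) ‖vᵢ‖²_H = n⁻¹ ∑ ⟨∇f(θᵢ), vᵢ⟩` (`average_bound`).
Since `α(0)² = (2/π)(1-η̃)²/σ²`, squaring with suitable weights and integrating gives the claim.
-/

open MeasureTheory ProbabilityTheory Real
open scoped RealInnerProductSpace ENNReal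

noncomputable section

/-- Euclidean space `ℝ^d`. -/
abbrev Vec (d : ℕ) := EuclideanSpace ℝ (Fin d)

/-- The expected `ℓ¹` loss `f(θ) = E |y - ⟨x, θ⟩|` where `y = ⟨x, θ*⟩ + ε + b`. -/
noncomputable def fLoss {d : ℕ} {Ω : Type} [MeasurableSpace Ω] (P : Measure Ω)
    (x : Ω → Vec d) (ε b : Ω → ℝ) (θs θ : Vec d) : ℝ :=
  ∫ ω, |⟪x ω, θs⟫ + ε ω + b ω - ⟪x ω, θ⟫| ∂P

/-- `σ_θ = ‖θ - θ*‖_H = √⟨θ - θ*, H (θ - θ*)⟩`. -/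
noncomputable def sigTh {d : ℕ} (H : Matrix (Fin d) (Fin d) ℝ) (θs θ : Vec d) : ℝ :=
  Real.sqrt ⟪θ - θs, Matrix.toEuclideanLin H (θ - θs)⟫

/-- The effective outlier proportion `η̃ = 1 - E[exp (-b² / (2σ²))]`. -/
noncomputable def etaT {Ω : Type} [MeasurableSpace Ω] (P : Measure Ω) (b : Ω → ℝ)
    (σ : ℝ) : ℝ :=
  1 - ∫ ω, Real.exp (-(b ω) ^ 2 / (2 * σ ^ 2)) ∂P

/-- `α(z) = √(2/π) · (σ² + z²)^(-1/2) · E[exp (-b² / (2 (σ² + z²)))]`. -/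
noncomputable def alphaF {Ω : Type} [MeasurableSpace Ω] (P : Measure Ω) (b : Ω → ℝ)
    (σ z : ℝ) : ℝ :=
  Real.sqrt (2 / π) * (Real.sqrt (σ ^ 2 + z ^ 2))⁻¹ *
    ∫ ω, Real.exp (-(b ω) ^ 2 / (2 * (σ ^ 2 + z ^ 2))) ∂P

/-- The Gauss error function. -/
noncomputable def erf (t : ℝ) : ℝ :=
  2 / Real.sqrt π * ∫ u in (0:ℝ)..t, Real.exp (-u ^ 2)

/-! ### Comparison of `α(z)` with `α(0)` -/

lemma exp_neg_sq_integrable {Ω : Type} [MeasurableSpace Ω] (P : Measure Ω)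
    [IsProbabilityMeasure P] (b : Ω → ℝ) (hbm : Measurable b) {c : ℝ} (hc : 0 ≤ c) :
    Integrable (fun ω => Real.exp (-(b ω) ^ 2 / c)) P := by
  refine Integrable.mono' (integrable_const (1 : ℝ)) (by fun_prop) (ae_of_all _ fun ω => ?_)
  rw [Real.norm_eq_abs, abs_of_pos (Real.exp_pos _), Real.exp_le_one_iff]
  exact div_nonpos_of_nonpos_of_nonneg (by nlinarith [sq_nonneg (b ω)]) hc

lemma one_sub_le_integral_exp {Ω : Type} [MeasurableSpace Ω] (P : Measure Ω)
    [IsProbabilityMeasure P] (b : Ω → ℝ) (hbm : Measurable b) {η : ℝ} (hη0 : 0 ≤ η)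
    (hbη : P {ω | b ω ≠ 0} = ENNReal.ofReal η) {c : ℝ} (hc : 0 ≤ c) :
    1 - η ≤ ∫ ω, Real.exp (-(b ω) ^ 2 / c) ∂P := by
  have hms : MeasurableSet {ω | b ω ≠ 0} := (hbm (measurableSet_singleton 0)).compl
  have h1 : ∫ ω, {ω | b ω ≠ 0}ᶜ.indicator (fun _ => (1 : ℝ)) ω ∂P = 1 - η := by
    rw [integral_indicator_const _ hms.compl, probReal_compl_eq_one_sub hms, measureReal_def, hbη,
      ENNReal.toReal_ofReal hη0]
    simp
  rw [← h1]
  refine integral_mono ((integrable_const (1 : ℝ)).indicator hms.compl)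
    (exp_neg_sq_integrable P b hbm hc) fun ω => ?_
  by_cases h : b ω = 0
  · simp [h]
  · simpa [h] using (Real.exp_pos _).le

/-- The Gaussian weight `E exp (-b²/(2v))` at variance `σ²` is bounded below by a power of its
value at the larger variance `σ² + z²`; this is Jensen's inequality for `u ↦ u ^ (1 + z²/σ²)`. -/
lemma rpow_integral_exp_le {Ω : Type} [MeasurableSpace Ω] (P : Measure Ω)
    [IsProbabilityMeasure P] (b : Ω → ℝ) (hbm : Measurable b) {σ : ℝ} (hσ : 0 < σ) (z : ℝ) :
    (∫ ω, Real.exp (-(b ω) ^ 2 / (2 * (σ ^ 2 + z ^ 2))) ∂P) ^ (1 + z ^ 2 / σ ^ 2)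
      ≤ ∫ ω, Real.exp (-(b ω) ^ 2 / (2 * σ ^ 2)) ∂P := by
  have hp : 1 ≤ 1 + z ^ 2 / σ ^ 2 := by
    have : 0 ≤ z ^ 2 / σ ^ 2 := by positivity
    linarith
  have key : ∀ ω, Real.exp (-(b ω) ^ 2 / (2 * (σ ^ 2 + z ^ 2))) ^ (1 + z ^ 2 / σ ^ 2)
      = Real.exp (-(b ω) ^ 2 / (2 * σ ^ 2)) := by
    intro ω
    rw [← Real.exp_mul]
    congr 1
    have : σ ^ 2 + z ^ 2 ≠ 0 := by positivity
    field_simp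
  have := (convexOn_rpow hp).map_integral_le (μ := P)
    (f := fun ω => Real.exp (-(b ω) ^ 2 / (2 * (σ ^ 2 + z ^ 2))))
    (fun u _ => (Real.continuousAt_rpow_const _ _ (Or.inr (by linarith))).continuousWithinAt)
    isClosed_Ici (ae_of_all _ fun ω => (Real.exp_pos _).le)
    (exp_neg_sq_integrable P b hbm (by positivity))
    (by
      simp only [Function.comp_def, key]
      exact exp_neg_sq_integrable P b hbm (by positivity))
  simpa only [key] using this

/-- With `ℓ = -log (1 - η)`, the left-hand side is `1 - e^{-t²ℓ} ≤ min 1 (t²ℓ) ≤ (1 + ℓ) t`, which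
is at most the right-hand side because `2 log 2 ≥ 1`. -/
lemma one_sub_rpow_le {η t : ℝ} (hη0 : 0 ≤ η) (hη1 : η < 1) (ht : 0 ≤ t) :
    1 - (1 - η) ^ (t ^ 2) ≤ 2 * Real.log (2 / (1 - η)) * t := by
  have h0 : 0 < 1 - η := by linarith
  have hl : 0 ≤ -Real.log (1 - η) := by
    have := Real.log_nonpos h0.le (by linarith)
    linarith
  have h2 := Real.log_two_gt_d9
  rw [Real.log_div (by norm_num) h0.ne', Real.rpow_def_of_pos h0]
  set l := -Real.log (1 - η) with hld
  have e1 := Real.add_one_le_exp (Real.log (1 - η) * t ^ 2)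
  have e2 := Real.exp_pos (Real.log (1 - η) * t ^ 2)
  have hll : Real.log (1 - η) = -l := by simp [hld]
  rw [hll] at e1 e2 ⊢
  have h3 : (1 + l) * t ≤ 2 * (Real.log 2 - -l) * t := by
    apply mul_le_mul_of_nonneg_right _ ht
    linarith
  by_cases h : 1 ≤ (1 + l) * t
  · linarith
  · push Not at h
    have : l * t ^ 2 ≤ t := by
      have : t * (l * t) ≤ t * 1 := mul_le_mul_of_nonneg_left (by nlinarith) ht
      nlinarith
    nlinarith [mul_nonneg hl ht]

/-- The key comparison: `α(z)` deviates from `α(0)` by a relative error at most linear in `z`. -/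
lemma abs_alphaF_sub_le {Ω : Type} [MeasurableSpace Ω] (P : Measure Ω)
    [IsProbabilityMeasure P] (b : Ω → ℝ) (hbm : Measurable b) {σ η : ℝ} (hσ : 0 < σ)
    (hη0 : 0 ≤ η) (hη1 : η < 1) (hbη : P {ω | b ω ≠ 0} = ENNReal.ofReal η) {z : ℝ} (hz : 0 ≤ z) :
    |alphaF P b σ 0 - alphaF P b σ z| ≤ 2 * Real.log (2 / (1 - η)) / σ * z * alphaF P b σ z := by
  have hv : 0 < σ ^ 2 + z ^ 2 := by positivity
  have hpow := rpow_integral_exp_le P b hbm hσ z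
  have hEη := one_sub_le_integral_exp P b hbm hη0 hbη (c := 2 * (σ ^ 2 + z ^ 2)) (by positivity)
  have hmono : ∫ ω, Real.exp (-(b ω) ^ 2 / (2 * σ ^ 2)) ∂P
      ≤ ∫ ω, Real.exp (-(b ω) ^ 2 / (2 * (σ ^ 2 + z ^ 2))) ∂P := by
    refine integral_mono (exp_neg_sq_integrable P b hbm (by positivity))
      (exp_neg_sq_integrable P b hbm (by positivity)) fun ω => ?_
    apply Real.exp_le_exp.2
    rw [neg_div, neg_div, neg_le_neg_iff]
    gcongr
    nlinarith [sq_nonneg z]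
  have hone := one_sub_rpow_le hη0 hη1 (t := z / σ) (by positivity)
  have h2 := Real.log_two_gt_d9
  have hL : 1 ≤ 2 * Real.log (2 / (1 - η)) := by
    have h0 : 0 < 1 - η := by linarith
    have := Real.log_nonpos h0.le (by linarith)
    rw [Real.log_div (by norm_num) h0.ne']
    linarith
  unfold alphaF
  set L := Real.log (2 / (1 - η))
  set E := ∫ ω, Real.exp (-(b ω) ^ 2 / (2 * (σ ^ 2 + z ^ 2))) ∂P
  simp only [ne_eq, OfNat.ofNat_ne_zero, not_false_eq_true, zero_pow, add_zero,
    Real.sqrt_sq hσ.le]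
  set E₀ := ∫ ω, Real.exp (-(b ω) ^ 2 / (2 * σ ^ 2)) ∂P
  have hE : 0 < E := by linarith
  set s := Real.sqrt (σ ^ 2 + z ^ 2)
  have hs2 : s ^ 2 = σ ^ 2 + z ^ 2 := Real.sq_sqrt hv.le
  have hs : 0 < s := Real.sqrt_pos.2 hv
  have hsσ : σ ≤ s := by nlinarith
  have hsz : s ≤ σ + z := by nlinarith [mul_nonneg hσ.le hz]
  have hlow : E * (1 - 2 * L * (z / σ)) ≤ E₀ := by
    rw [Real.rpow_add hE, Real.rpow_one, ← div_pow] at hpow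
    refine le_trans ?_ hpow
    have : (1 - η) ^ ((z / σ) ^ 2) ≤ E ^ ((z / σ) ^ 2) :=
      Real.rpow_le_rpow (by linarith) hEη (by positivity)
    exact mul_le_mul_of_nonneg_left (by linarith) hE.le
  have hE0 : 0 ≤ E₀ := integral_nonneg fun ω => (Real.exp_pos _).le
  have hmain : |s * E₀ - σ * E| ≤ 2 * L * z * E := by
    rw [abs_le]
    constructor
    · have h3 : σ * (E * (1 - 2 * L * (z / σ))) = σ * E - 2 * L * z * E := by
        field_simp
      have h4 := mul_le_mul_of_nonneg_left hlow hσ.le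
      have h5 := mul_le_mul_of_nonneg_right hsσ hE0
      linarith
    · have h5 := mul_le_mul_of_nonneg_left hmono hs.le
      have h6 := mul_le_mul_of_nonneg_right hsz hE.le
      have h7 := mul_le_mul_of_nonneg_right hL (mul_nonneg hz hE.le)
      nlinarith
  set k := Real.sqrt (2 / π)
  have hk : 0 ≤ k := Real.sqrt_nonneg _
  have e1 : k * σ⁻¹ * E₀ - k * s⁻¹ * E = k / (σ * s) * (s * E₀ - σ * E) := by
    field_simp
  have e2 : 2 * L / σ * z * (k * s⁻¹ * E) = k / (σ * s) * (2 * L * z * E) := by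
    field_simp
  rw [e1, e2, abs_mul, abs_of_nonneg (by positivity : 0 ≤ k / (σ * s))]
  exact mul_le_mul_of_nonneg_left hmain (by positivity)

/-! ### Gradient of the loss -/

open Filter Topology in
/-- Gaussian integration by parts against a sign function:
`E[sign (s g + β) g] = √(2/π) exp (-β²/(2s²))` for a standard normal `g`. -/
lemma integral_sign_mul_gaussian {s : ℝ} (hs : 0 < s) (β : ℝ) :
    ∫ g, (SignType.sign (s * g + β) : ℝ) * g ∂(gaussianReal 0 1)
      = Real.sqrt (2 / π) * Real.exp (-β ^ 2 / (2 * s ^ 2)) := by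
  rw [integral_gaussianReal_eq_integral_smul (by norm_num)]
  set c : ℝ := (Real.sqrt (2 * π))⁻¹ with hc
  -- the antiderivative of `g φ(g)`
  let F : ℝ → ℝ := fun g => -(c * Real.exp (-(1 / 2) * g ^ 2))
  let F' : ℝ → ℝ := fun g => c * (g * Real.exp (-(1 / 2) * g ^ 2))
  have hpdf : ∀ g, gaussianPDFReal 0 1 g = c * Real.exp (-(1 / 2) * g ^ 2) := by
    intro g
    simp only [gaussianPDFReal_def, hc, NNReal.coe_one, mul_one, sub_zero]
    congr 2
    ring
  have hF : ∀ g, HasDerivAt F (F' g) g := by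
    intro g
    have h1 : HasDerivAt (fun g : ℝ => -(1 / 2) * g ^ 2) (-g) g := by
      have := (hasDerivAt_pow 2 g).const_mul (-(1 / 2) : ℝ)
      convert! this using 1
      norm_num
      ring
    have := (h1.exp.const_mul c).neg
    convert! this using 1
    simp only [F']
    ring
  have hFint : Integrable F' := (integrable_mul_exp_neg_mul_sq (by norm_num)).const_mul c
  have hsq : Tendsto (fun u : ℝ => -(c * Real.exp (-u))) atTop (𝓝 0) := by
    have := ((Real.tendsto_exp_neg_atTop_nhds_zero).const_mul c).neg
    simpa using this
  have hFt : Tendsto F atTop (𝓝 0) := by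
    have h1 : Tendsto (fun g : ℝ => 1 / 2 * g ^ 2) atTop atTop :=
      (tendsto_pow_atTop (by norm_num)).const_mul_atTop (by norm_num)
    refine (hsq.comp h1).congr fun g => ?_
    simp only [F, Function.comp]
    congr 3
    ring
  have hFb : Tendsto F atBot (𝓝 0) := by
    refine (hFt.comp tendsto_neg_atBot_atTop).congr fun g => ?_
    simp [F]
  set a : ℝ := -β / s with ha
  have hI : ∫ g in Set.Ioi a, F' g = 0 - F a :=
    integral_Ioi_of_hasDerivAt_of_tendsto' (fun g _ => hF g) hFint.integrableOn hFt
  have hJ : ∫ g in Set.Iic a, F' g = F a - 0 :=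
    integral_Iic_of_hasDerivAt_of_tendsto' (fun g _ => hF g) hFint.integrableOn hFb
  have hne : ∀ᵐ g : ℝ, g ≠ a := by
    simp [ae_iff]
  have hcongr : ∀ᵐ g : ℝ, gaussianPDFReal 0 1 g • ((SignType.sign (s * g + β) : ℝ) * g)
      = (Set.Ioi a).indicator F' g - (Set.Iic a).indicator F' g := by
    filter_upwards [hne] with g hg
    rw [hpdf, smul_eq_mul]
    rcases lt_or_gt_of_ne hg with h | h
    · have hneg : s * g + β < 0 := by
        rw [ha, lt_div_iff₀ hs] at h
        linarith
      rw [sign_neg hneg, Set.indicator_of_notMem (by simpa using h.le),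
        Set.indicator_of_mem (by simpa using h.le)]
      simp [F']
      ring
    · have hpos : 0 < s * g + β := by
        rw [ha, div_lt_iff₀ hs] at h
        linarith
      rw [sign_pos hpos, Set.indicator_of_mem (by simpa using h),
        Set.indicator_of_notMem (by simpa using h)]
      simp [F']
      ring
  rw [integral_congr_ae hcongr, integral_sub (hFint.indicator measurableSet_Ioi)
    (hFint.indicator measurableSet_Iic), integral_indicator measurableSet_Ioi,
    integral_indicator measurableSet_Iic, hI, hJ]
  have h2c : Real.sqrt (2 / π) = 2 * c := by
    rw [hc, Real.sqrt_div (by norm_num), Real.sqrt_mul (by norm_num)]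
    have h2 : Real.sqrt 2 ^ 2 = 2 := Real.sq_sqrt (by norm_num)
    have : Real.sqrt 2 ≠ 0 := by positivity
    have : Real.sqrt π ≠ 0 := by positivity
    field_simp
    exact h2
  have he : -(1 / 2) * a ^ 2 = -β ^ 2 / (2 * s ^ 2) := by
    rw [ha]
    field_simp
  simp only [F, he, h2c]
  ring

/-- Derivative in the noise scale `s` of `E|s g + b|`, with `g` standard normal and `b ∼ ν`
independent. -/
lemma hasDerivAt_scale {ν : Measure ℝ} [IsProbabilityMeasure ν]
    (hν : Integrable (fun β : ℝ => β) ν) {s : ℝ} (hs : 0 < s) :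
    HasDerivAt (fun r : ℝ => ∫ p : ℝ × ℝ, |r * p.1 + p.2| ∂((gaussianReal 0 1).prod ν))
      (∫ β, Real.sqrt (2 / π) * Real.exp (-β ^ 2 / (2 * s ^ 2)) ∂ν) s := by
  have hg : Integrable (fun g : ℝ => g) (gaussianReal 0 1) :=
    (memLp_id_gaussianReal' 1 (by norm_num)).integrable le_rfl
  have hg1 : Integrable (fun p : ℝ × ℝ => p.1) ((gaussianReal 0 1).prod ν) := hg.comp_fst ν
  have hb1 : Integrable (fun p : ℝ × ℝ => p.2) ((gaussianReal 0 1).prod ν) := hν.comp_snd _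
  have hsm : Measurable (fun u : ℝ => (SignType.sign u : ℝ)) := by
    have : (fun u : ℝ => (SignType.sign u : ℝ))
        = fun u => if 0 < u then 1 else if u < 0 then -1 else 0 := by
      funext u
      rw [sign_apply]
      split_ifs <;> simp
    rw [this]
    exact Measurable.ite measurableSet_Ioi measurable_const
      (Measurable.ite measurableSet_Iio measurable_const measurable_const)
  have hmain := hasDerivAt_integral_of_dominated_loc_of_lip (𝕜 := ℝ)
    (μ := (gaussianReal 0 1).prod ν) (F := fun (r : ℝ) (p : ℝ × ℝ) => |r * p.1 + p.2|)
    (F' := fun p : ℝ × ℝ => (SignType.sign (s * p.1 + p.2) : ℝ) * p.1) (x₀ := s)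
    (s := Set.univ) (bound := fun p => p.1) Filter.univ_mem
    (Filter.Eventually.of_forall fun r => by fun_prop)
    (((hg1.const_mul s).add hb1).abs)
    (((hsm.comp (by fun_prop : Measurable fun p : ℝ × ℝ => s * p.1 + p.2)).mul
      measurable_fst).aestronglyMeasurable)
    (ae_of_all _ fun p => by
      refine LipschitzOnWith.of_dist_le_mul fun u _ v _ => ?_
      rw [Real.dist_eq, Real.dist_eq, Real.coe_nnabs]
      refine (abs_abs_sub_abs_le_abs_sub _ _).trans ?_
      rw [← abs_mul]
      apply le_of_eq
      congr 1
      ring)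
    hg1
    (by
      -- for each `β` the kink `s g + β = 0` is a single point, which has no Gaussian mass
      have hae : ∀ᵐ p : ℝ × ℝ ∂((gaussianReal 0 1).prod ν), s * p.1 + p.2 ≠ 0 := by
        have hms : MeasurableSet {p : ℝ × ℝ | s * p.1 + p.2 ≠ 0} :=
          ((by fun_prop : Measurable fun p : ℝ × ℝ => s * p.1 + p.2)
            (measurableSet_singleton 0)).compl
        rw [Measure.ae_prod_iff_ae_ae hms, Measure.ae_ae_comm hms]
        refine ae_of_all _ fun β => ?_
        have hne : ∀ᵐ g : ℝ, g ≠ -β / s := by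
          simp [ae_iff]
        filter_upwards [(gaussianReal_absolutelyContinuous 0 one_ne_zero).ae_le hne] with g hg h0
        exact hg (by field_simp; linarith)
      filter_upwards [hae] with p hp
      have h1 : HasDerivAt (fun r : ℝ => r * p.1 + p.2) p.1 s := by
        simpa using ((hasDerivAt_id s).mul_const p.1).add_const p.2
      exact (hasDerivAt_abs hp).comp s h1)
  obtain ⟨hI, hD⟩ := hmain
  rw [integral_prod_symm _ hI] at hD
  simpa only [integral_sign_mul_gaussian hs] using hD

lemma inner_toEuclideanLin_self_nonneg {d : ℕ} {H : Matrix (Fin d) (Fin d) ℝ} (hH : H.PosDef)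
    (v : Vec d) : 0 ≤ ⟪v, Matrix.toEuclideanLin H v⟫ :=
  (Matrix.isPositive_toEuclideanLin_iff.2 hH.posSemidef).re_inner_nonneg_right v

/-- The loss depends on `θ` only through the total noise scale `√(σ² + ‖θ - θ*‖²_H)`, since
`⟨x, θ* - θ⟩ + ε` is a centered Gaussian independent of `b`. -/
lemma fLoss_eq {d : ℕ} {Ω : Type} [MeasurableSpace Ω] (P : Measure Ω) [IsProbabilityMeasure P]
    (θs : Vec d) (H : Matrix (Fin d) (Fin d) ℝ) (hH : H.PosDef) (σ : ℝ)
    (x : Ω → Vec d) (ε b : Ω → ℝ)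
    (hxm : Measurable x) (hεm : Measurable ε) (hbm : Measurable b)
    (hxg : ∀ v : Vec d, Measure.map (fun ω => ⟪v, x ω⟫) P
        = gaussianReal 0 (Real.toNNReal ⟪v, Matrix.toEuclideanLin H v⟫))
    (hεg : Measure.map ε P = gaussianReal 0 (Real.toNNReal (σ ^ 2)))
    (hind1 : IndepFun x ε P)
    (hind2 : IndepFun (fun ω => (x ω, ε ω)) b P) (θ : Vec d) :
    fLoss P x ε b θs θ = ∫ p : ℝ × ℝ,
      |Real.sqrt (σ ^ 2 + ⟪θ - θs, Matrix.toEuclideanLin H (θ - θs)⟫) * p.1 + p.2|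
        ∂((gaussianReal 0 1).prod (P.map b)) := by
  have hq := inner_toEuclideanLin_self_nonneg hH (θ - θs)
  set q := ⟪θ - θs, Matrix.toEuclideanLin H (θ - θs)⟫ with hqd
  have hqv : ⟪θs - θ, Matrix.toEuclideanLin H (θs - θ)⟫ = q := by
    rw [hqd, ← neg_sub θ θs, map_neg, inner_neg_neg]
  have := Measure.isProbabilityMeasure_map (μ := P) hbm.aemeasurable
  set s := Real.sqrt (σ ^ 2 + q) with hs
  set W : Ω → ℝ := (fun ω => ⟪θs - θ, x ω⟫) + ε with hW
  have hWm : Measurable W := by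
    rw [hW]
    exact Measurable.add (by fun_prop) hεm
  have hWlaw : P.map W = (gaussianReal 0 1).map (s * ·) := by
    have hi : IndepFun (fun ω => ⟪θs - θ, x ω⟫) ε P :=
      hind1.comp (φ := fun y : Vec d => ⟪θs - θ, y⟫) (ψ := id) (by fun_prop) measurable_id
    rw [hW, gaussianReal_add_gaussianReal_of_indepFun hi (hxg _) hεg, gaussianReal_map_const_mul,
      hqv]
    congr 1
    · simp
    · ext
      simp only [NNReal.coe_add, NNReal.coe_mk, mul_one,
        Real.coe_toNNReal _ hq, Real.coe_toNNReal _ (sq_nonneg σ)]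
      rw [hs, Real.sq_sqrt (by positivity)]
      ring
  have hWb : IndepFun W b P :=
    hind2.comp (φ := fun p : Vec d × ℝ => ⟪θs - θ, p.1⟫ + p.2) (ψ := id) (by fun_prop)
      measurable_id
  have hjoint : P.map (fun ω => (W ω, b ω))
      = ((gaussianReal 0 1).prod (P.map b)).map (Prod.map (s * ·) id) := by
    rw [hWb.map_prod_eq_prod_map_map hWm.aemeasurable hbm.aemeasurable, hWlaw,
      ← Measure.map_prod_map _ _ (by fun_prop) measurable_id, Measure.map_id]
  have h1 : fLoss P x ε b θs θ = ∫ p : ℝ × ℝ, |p.1 + p.2| ∂(P.map (fun ω => (W ω, b ω))) := by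
    rw [integral_map (by fun_prop) (by fun_prop)]
    unfold fLoss
    congr 1
    funext ω
    congr 1
    simp only [hW, Pi.add_apply, inner_sub_left, real_inner_comm (x ω)]
    ring
  rw [h1, hjoint, integral_map (by fun_prop) (by fun_prop)]
  rfl

/-- `∇f(θ) = α(σ_θ) H (θ - θ*)`, by the chain rule through the noise scale. -/
lemma gradient_fLoss {d : ℕ} {Ω : Type} [MeasurableSpace Ω] (P : Measure Ω)
    [IsProbabilityMeasure P]
    (θs : Vec d) (H : Matrix (Fin d) (Fin d) ℝ) (hH : H.PosDef) (σ : ℝ) (hσ : 0 < σ)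
    (x : Ω → Vec d) (ε b : Ω → ℝ)
    (hxm : Measurable x) (hεm : Measurable ε) (hbm : Measurable b)
    (hxg : ∀ v : Vec d, Measure.map (fun ω => ⟪v, x ω⟫) P
        = gaussianReal 0 (Real.toNNReal ⟪v, Matrix.toEuclideanLin H v⟫))
    (hεg : Measure.map ε P = gaussianReal 0 (Real.toNNReal (σ ^ 2)))
    (hbi : Integrable b P)
    (hind1 : IndepFun x ε P)
    (hind2 : IndepFun (fun ω => (x ω, ε ω)) b P) (θ : Vec d) :
    gradient (fun θ => fLoss P x ε b θs θ) θ
      = alphaF P b σ (sigTh H θs θ) • Matrix.toEuclideanLin H (θ - θs) := by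
  have := Measure.isProbabilityMeasure_map (μ := P) hbm.aemeasurable
  have hq := inner_toEuclideanLin_self_nonneg hH (θ - θs)
  have hsym : (Matrix.toEuclideanLin H).IsSymmetric :=
    (Matrix.isPositive_toEuclideanLin_iff.2 hH.posSemidef).isSymmetric
  apply HasGradientAt.gradient
  rw [hasGradientAt_iff_hasFDerivAt]
  simp only [fLoss_eq P θs H hH σ x ε b hxm hεm hbm hxg hεg hind1 hind2]
  let T : Vec d →L[ℝ] Vec d := LinearMap.toContinuousLinearMap (Matrix.toEuclideanLin H)
  have hT : ∀ v, T v = Matrix.toEuclideanLin H v := fun v => rfl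
  have hz : sigTh H θs θ ^ 2 = ⟪θ - θs, Matrix.toEuclideanLin H (θ - θs)⟫ := by
    rw [sigTh, Real.sq_sqrt hq]
  have hpos : 0 < σ ^ 2 + ⟪θ - θs, Matrix.toEuclideanLin H (θ - θs)⟫ := by positivity
  have hνi : Integrable (fun β : ℝ => β) (P.map b) := by
    rw [integrable_map_measure (by fun_prop) hbm.aemeasurable]
    exact hbi
  have hdiff : HasFDerivAt (fun t : Vec d => t - θs) (ContinuousLinearMap.id ℝ (Vec d)) θ :=
    (hasFDerivAt_id θ).sub_const θs
  have hin := (hdiff.inner ℝ (T.hasFDerivAt.comp θ hdiff)).const_add (σ ^ 2)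
  have hsq := hin.sqrt hpos.ne'
  have hF := (hasDerivAt_scale hνi (Real.sqrt_pos.2 hpos)).comp_hasFDerivAt θ hsq
  refine hF.congr_fderiv ?_
  ext v
  simp only [Function.comp, hT]
  rw [integral_const_mul, integral_map hbm.aemeasurable (by fun_prop), Real.sq_sqrt hpos.le]
  simp only [smul_apply, ContinuousLinearMap.comp_apply, fderivInnerCLM_apply,
    ContinuousLinearMap.prod_apply, ContinuousLinearMap.id_apply, hT, smul_eq_mul,
    InnerProductSpace.toDual_apply_apply, inner_smul_left, alphaF, hz]
  have hsy : ⟪θ - θs, Matrix.toEuclideanLin H v⟫ = ⟪Matrix.toEuclideanLin H (θ - θs), v⟫ :=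
    (hsym _ _).symm
  rw [hsy, real_inner_comm _ v]
  simp only [conj_trivial]
  field_simp
  ring

/-! ### Averages in the `H`-norm -/

open scoped MatrixOrder in
/-- A linear square root of the quadratic form: `‖v‖_H = ‖N v‖` for some linear map `N`. -/
lemma exists_factor {d : ℕ} {H : Matrix (Fin d) (Fin d) ℝ} (hH : H.PosDef) :
    ∃ N : Vec d →ₗ[ℝ] Vec d, ∀ v w, ⟪v, Matrix.toEuclideanLin H w⟫ = ⟪N v, N w⟫ := by
  obtain ⟨B, rfl⟩ := CStarAlgebra.nonneg_iff_eq_star_mul_self.mp hH.posSemidef.nonneg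
  refine ⟨Matrix.toEuclideanLin B, fun v w => ?_⟩
  have h : Matrix.toEuclideanLin (star B * B) w
      = (Matrix.toEuclideanLin B).adjoint (Matrix.toEuclideanLin B w) := by
    rw [← Matrix.toEuclideanLin_conjTranspose_eq_adjoint, Matrix.star_eq_conjTranspose]
    simp [Matrix.toLpLin_apply, Matrix.mulVec_mulVec]
  rw [h, LinearMap.adjoint_inner_right]

lemma toEuclideanLin_inv_apply {d : ℕ} {H : Matrix (Fin d) (Fin d) ℝ} (hH : H.PosDef)
    (v : Vec d) : Matrix.toEuclideanLin H⁻¹ (Matrix.toEuclideanLin H v) = v := by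
  have hdet : IsUnit H.det := (Matrix.isUnit_iff_isUnit_det _).1 hH.isUnit
  simp [Matrix.toLpLin_apply, Matrix.mulVec_mulVec, Matrix.nonsing_inv_mul _ hdet]

/-- The deterministic core: if `a₀` is close to each weight `aᵢ` up to the relative error
`K ‖vᵢ‖_H`, the average of the `vᵢ` is controlled by the average of the `aᵢ vᵢ`. The split
`(p + q)² ≤ 5/4 p² + 5 q²` is chosen so that `5/4 · π/2 ≤ 2`. -/
lemma average_bound {d : ℕ} {H : Matrix (Fin d) (Fin d) ℝ} (hH : H.PosDef) (n : ℕ)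
    (v : ℕ → Vec d) (a : ℕ → ℝ) (a₀ K : ℝ)
    (ha : ∀ i, |a₀ - a i| ≤ K * Real.sqrt ⟪v i, Matrix.toEuclideanLin H (v i)⟫ * a i) :
    a₀ ^ 2 * ⟪(n : ℝ)⁻¹ • ∑ i ∈ Finset.range n, v i,
        Matrix.toEuclideanLin H ((n : ℝ)⁻¹ • ∑ i ∈ Finset.range n, v i)⟫
      ≤ 5 / 4 * ⟪(n : ℝ)⁻¹ • ∑ i ∈ Finset.range n, a i • Matrix.toEuclideanLin H (v i),
          Matrix.toEuclideanLin H⁻¹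
            ((n : ℝ)⁻¹ • ∑ i ∈ Finset.range n, a i • Matrix.toEuclideanLin H (v i))⟫
        + 5 * K ^ 2 * ((n : ℝ)⁻¹ *
          ∑ i ∈ Finset.range n, ⟪a i • Matrix.toEuclideanLin H (v i), v i⟫) ^ 2 := by
  obtain ⟨N, hN⟩ := exists_factor hH
  set T := Matrix.toEuclideanLin H with hT
  set u : Vec d := (n : ℝ)⁻¹ • ∑ i ∈ Finset.range n, a i • v i with hu
  have hTu : (n : ℝ)⁻¹ • ∑ i ∈ Finset.range n, a i • T (v i) = T u := by
    simp [hu, map_sum]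
  have hC : ∀ i, ⟪a i • T (v i), v i⟫ = a i * ‖N (v i)‖ ^ 2 := by
    intro i
    rw [real_inner_smul_left, real_inner_comm, hN, real_inner_self_eq_norm_sq]
  have hsq : ∀ w, Real.sqrt ⟪w, T w⟫ = ‖N w‖ := by
    intro w
    rw [hN, real_inner_self_eq_norm_sq, Real.sqrt_sq (norm_nonneg _)]
  simp only [hsq] at ha
  rw [hTu, toEuclideanLin_inv_apply hH, real_inner_comm u (T u), hN, hN,
    real_inner_self_eq_norm_sq, real_inner_self_eq_norm_sq]
  simp only [hC]
  set m := (n : ℝ)⁻¹ • ∑ i ∈ Finset.range n, v i with hm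
  set w : Vec d := (n : ℝ)⁻¹ • ∑ i ∈ Finset.range n, (a₀ - a i) • v i with hw
  have hdecomp : a₀ • m = u + w := by
    rw [hm, hu, hw, ← smul_add, ← Finset.sum_add_distrib, smul_comm, Finset.smul_sum]
    congr 2
    funext i
    rw [← add_smul, add_sub_cancel]
  have hwb : ‖N w‖ ≤ K * ((n : ℝ)⁻¹ * ∑ i ∈ Finset.range n, a i * ‖N (v i)‖ ^ 2) := by
    rw [hw, map_smul, map_sum, norm_smul, Real.norm_of_nonneg (by positivity), mul_left_comm]
    refine mul_le_mul_of_nonneg_left ?_ (by positivity)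
    rw [Finset.mul_sum]
    refine (norm_sum_le _ _).trans (Finset.sum_le_sum fun i _ => ?_)
    rw [map_smul, norm_smul, Real.norm_eq_abs]
    have := mul_le_mul_of_nonneg_right (ha i) (norm_nonneg (N (v i)))
    nlinarith
  have h1 : a₀ ^ 2 * ‖N m‖ ^ 2 = ‖N (u + w)‖ ^ 2 := by
    rw [← hdecomp, map_smul N a₀ m, norm_smul, mul_pow, Real.norm_eq_abs, sq_abs]
  rw [h1, map_add]
  have h2 := norm_add_le (N u) (N w)
  set C := (n : ℝ)⁻¹ * ∑ i ∈ Finset.range n, a i * ‖N (v i)‖ ^ 2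
  have h3 : ‖N w‖ ^ 2 ≤ K ^ 2 * C ^ 2 := by
    rw [← mul_pow]
    exact pow_le_pow_left₀ (norm_nonneg _) hwb 2
  have h4 : ‖N u + N w‖ ^ 2 ≤ (‖N u‖ + ‖N w‖) ^ 2 := pow_le_pow_left₀ (norm_nonneg _) h2 2
  nlinarith [sq_nonneg (‖N u‖ / 2 - 2 * ‖N w‖)]

theorem stmt4 {d : ℕ} (hd : 1 ≤ d)
    {Ω : Type} [MeasurableSpace Ω] (P : Measure Ω) [IsProbabilityMeasure P]
    (θs : Vec d) (H : Matrix (Fin d) (Fin d) ℝ) (hH : H.PosDef)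
    (σ η : ℝ) (hσ : 0 < σ) (hη0 : 0 ≤ η) (hη1 : η < 1)
    (x : Ω → Vec d) (ε b : Ω → ℝ)
    (hxm : Measurable x) (hεm : Measurable ε) (hbm : Measurable b)
    (hxg : ∀ v : Vec d, Measure.map (fun ω => ⟪v, x ω⟫) P
        = gaussianReal 0 (Real.toNNReal ⟪v, Matrix.toEuclideanLin H v⟫))
    (hεg : Measure.map ε P = gaussianReal 0 (Real.toNNReal (σ ^ 2)))
    (hbη : P {ω | b ω ≠ 0} = ENNReal.ofReal η)
    (hbi : Integrable b P)
    (hind1 : IndepFun x ε P)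
    (hind2 : IndepFun (fun ω => (x ω, ε ω)) b P)
    (n : ℕ) (hn : 1 ≤ n)
    {Ω₂ : Type} [MeasurableSpace Ω₂] (P₂ : Measure Ω₂) [IsProbabilityMeasure P₂]
    (Θ : ℕ → Ω₂ → Vec d) (hΘ : ∀ i, Measurable (Θ i)):
    ∫⁻ ω, ENNReal.ofReal
        ⟪(n : ℝ)⁻¹ • (∑ i ∈ Finset.range n, Θ i ω) - θs,
          Matrix.toEuclideanLin H ((n : ℝ)⁻¹ • (∑ i ∈ Finset.range n, Θ i ω) - θs)⟫ ∂P₂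
      ≤ ENNReal.ofReal (2 * σ ^ 2 / (1 - etaT P b σ) ^ 2) *
          ∫⁻ ω, ENNReal.ofReal
            ⟪(n : ℝ)⁻¹ • ∑ i ∈ Finset.range n,
                gradient (fun θ => fLoss P x ε b θs θ) (Θ i ω),
              Matrix.toEuclideanLin H⁻¹ ((n : ℝ)⁻¹ • ∑ i ∈ Finset.range n,
                gradient (fun θ => fLoss P x ε b θs θ) (Θ i ω))⟫ ∂P₂
        + ENNReal.ofReal (800 / (1 - etaT P b σ) ^ 2 * Real.log (2 / (1 - η)) ^ 2) *
          ∫⁻ ω, ENNReal.ofReal (((n : ℝ)⁻¹ * ∑ i ∈ Finset.range n,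
              ⟪gradient (fun θ => fLoss P x ε b θs θ) (Θ i ω), Θ i ω - θs⟫) ^ 2) ∂P₂ := by
  set f : Vec d → ℝ := fun θ => fLoss P x ε b θs θ with hf
  have hgrad : ∀ θ, gradient f θ
      = alphaF P b σ (sigTh H θs θ) • Matrix.toEuclideanLin H (θ - θs) :=
    gradient_fLoss P θs H hH σ hσ x ε b hxm hεm hbm hxg hεg hbi hind1 hind2
  have hgm : Measurable (gradient f) :=
    (InnerProductSpace.toDual ℝ (Vec d)).symm.continuous.measurable.comp (measurable_fderiv ℝ f)
  have hmeas : Measurable fun ω => ENNReal.ofReal (800 / (1 - etaT P b σ) ^ 2 *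
      Real.log (2 / (1 - η)) ^ 2) * ENNReal.ofReal (((n : ℝ)⁻¹ * ∑ i ∈ Finset.range n,
        ⟪gradient f (Θ i ω), Θ i ω - θs⟫) ^ 2) := by
    refine (ENNReal.measurable_ofReal.comp ((Measurable.const_mul
      (Finset.measurable_sum _ fun i _ => ?_) _).pow_const 2)).const_mul _
    exact (hgm.comp (hΘ i)).inner ((hΘ i).sub_const θs)
  rw [← lintegral_const_mul' _ _ ENNReal.ofReal_ne_top,
    ← lintegral_const_mul' _ _ ENNReal.ofReal_ne_top, ← lintegral_add_right _ hmeas]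
  refine lintegral_mono fun ω => ?_
  rw [← ENNReal.ofReal_mul (by positivity), ← ENNReal.ofReal_mul (by positivity)]
  refine le_trans (ENNReal.ofReal_le_ofReal ?_) ENNReal.ofReal_add_le
  have hE : etaT P b σ = 1 - ∫ ω, Real.exp (-(b ω) ^ 2 / (2 * σ ^ 2)) ∂P := rfl
  have hEpos : 1 - η ≤ 1 - etaT P b σ := by
    rw [hE, sub_sub_cancel]
    exact one_sub_le_integral_exp P b hbm hη0 hbη (by positivity)
  set E := 1 - etaT P b σ
  set L := Real.log (2 / (1 - η))
  have hα0 : alphaF P b σ 0 ^ 2 = 2 / π * E ^ 2 / σ ^ 2 := by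
    have hEe : ∫ ω, Real.exp (-(b ω) ^ 2 / (2 * σ ^ 2)) ∂P = E := by
      simp [E, hE]
    simp only [alphaF, ne_eq, OfNat.ofNat_ne_zero, not_false_eq_true, zero_pow, add_zero,
      Real.sqrt_sq hσ.le, hEe]
    rw [mul_pow, mul_pow, Real.sq_sqrt (by positivity)]
    field_simp
  have hcenter : (n : ℝ)⁻¹ • (∑ i ∈ Finset.range n, Θ i ω) - θs
      = (n : ℝ)⁻¹ • ∑ i ∈ Finset.range n, (Θ i ω - θs) := by
    have hn0 : (n : ℝ) ≠ 0 := by positivity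
    rw [Finset.sum_sub_distrib, smul_sub, Finset.sum_const, Finset.card_range,
      ← Nat.cast_smul_eq_nsmul ℝ, smul_smul, inv_mul_cancel₀ hn0, one_smul]
  have hcore := average_bound hH n (fun i => Θ i ω - θs)
    (fun i => alphaF P b σ (sigTh H θs (Θ i ω))) (alphaF P b σ 0) (2 * L / σ)
    (fun i => abs_alphaF_sub_le P b hbm hσ hη0 hη1 hbη (Real.sqrt_nonneg _))
  simp only [hgrad, hcenter]
  rw [hα0] at hcore
  have hG : 0 ≤ ⟪(n : ℝ)⁻¹ • ∑ i ∈ Finset.range n, alphaF P b σ (sigTh H θs (Θ i ω)) •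
        Matrix.toEuclideanLin H (Θ i ω - θs), Matrix.toEuclideanLin H⁻¹ ((n : ℝ)⁻¹ •
        ∑ i ∈ Finset.range n, alphaF P b σ (sigTh H θs (Θ i ω)) •
          Matrix.toEuclideanLin H (Θ i ω - θs))⟫ :=
    (Matrix.isPositive_toEuclideanLin_iff.2 hH.inv.posSemidef).re_inner_nonneg_right _
  have hC := sq_nonneg ((n : ℝ)⁻¹ * ∑ i ∈ Finset.range n,
    ⟪alphaF P b σ (sigTh H θs (Θ i ω)) • Matrix.toEuclideanLin H (Θ i ω - θs), Θ i ω - θs⟫)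
  generalize ((n : ℝ)⁻¹ * ∑ i ∈ Finset.range n,
    ⟪alphaF P b σ (sigTh H θs (Θ i ω)) • Matrix.toEuclideanLin H (Θ i ω - θs), Θ i ω - θs⟫) ^ 2
    = C at hcore hC ⊢
  generalize ⟪(n : ℝ)⁻¹ • ∑ i ∈ Finset.range n, alphaF P b σ (sigTh H θs (Θ i ω)) •
        Matrix.toEuclideanLin H (Θ i ω - θs), Matrix.toEuclideanLin H⁻¹ ((n : ℝ)⁻¹ •
        ∑ i ∈ Finset.range n, alphaF P b σ (sigTh H θs (Θ i ω)) •
          Matrix.toEuclideanLin H (Θ i ω - θs))⟫ = G at hcore hG ⊢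
  generalize ⟪(n : ℝ)⁻¹ • ∑ i ∈ Finset.range n, (Θ i ω - θs), Matrix.toEuclideanLin H
    ((n : ℝ)⁻¹ • ∑ i ∈ Finset.range n, (Θ i ω - θs))⟫ = A at hcore ⊢
  have hE0 : 0 < E := by linarith
  have hpi := Real.pi_lt_d2
  have hpi0 := Real.pi_pos
  -- multiplying the core bound by `π σ² / (2 E²)`
  have hmul := mul_le_mul_of_nonneg_left hcore (by positivity : 0 ≤ π / 2 * σ ^ 2 / E ^ 2)
  have e1 : π / 2 * σ ^ 2 / E ^ 2 * (2 / π * E ^ 2 / σ ^ 2 * A) = A := by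
    field_simp
  have e2 : π / 2 * σ ^ 2 / E ^ 2 * (5 / 4 * G + 5 * (2 * L / σ) ^ 2 * C)
      = 5 * π / 8 * (σ ^ 2 / E ^ 2 * G) + 10 * π * (L ^ 2 / E ^ 2 * C) := by
    field_simp
    ring
  rw [e1, e2] at hmul
  have e3 : 2 * σ ^ 2 / E ^ 2 * G + 800 / E ^ 2 * L ^ 2 * C
      = 2 * (σ ^ 2 / E ^ 2 * G) + 800 * (L ^ 2 / E ^ 2 * C) := by
    field_simp
  rw [e3]
  have p1 : 0 ≤ σ ^ 2 / E ^ 2 * G := by positivity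
  have p2 : 0 ≤ L ^ 2 / E ^ 2 * C := by positivity
  exact hmul.trans (add_le_add (mul_le_mul_of_nonneg_right (by linarith) p1)
    (mul_le_mul_of_nonneg_right (by linarith) p2))
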